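/- Assume the abc-conjecture. Then there exists a constant C > 0 such that for all real x > C and all real y with 1 ≤ y ≤ x^{0.2}, there do not exist three distinct squarefull integers n₁ < n₂ < n₃ all lying in the interval (x, x + y] with n₁ + n₃ = 2·n₂ (i.e., the squarefull numbers in (x, x + y] contain no non-trivial three-term arithmetic progression). -/

import Mathlib

/-- A positive integer `n` is squarefull if every prime dividing `n` does so to at
least the second power. -/
def IsSquarefull (n : ℕ) : Prop := ∀ p : ℕ, p.Prime → p ∣ n → p ^ 2 ∣ n

/-- The radical (kernel) of a natural number: the product of its prime divisors. -/
def natRadical (n : ℕ) : ℕ := ∏ p ∈ n.primeFactors, p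

/-- The abc-conjecture: for every `ε > 0` there is `C_ε > 0` such that for all
coprime positive integers `a`, `b`, `c` with `a + b = c`, one has
`c ≤ C_ε · rad(a·b·c)^(1+ε)`. -/
def ABCConjecture : Prop :=
  ∀ ε : ℝ, 0 < ε → ∃ Cε : ℝ, 0 < Cε ∧ ∀ a b c : ℕ,
    0 < a → 0 < b → 0 < c → Nat.Coprime a b → a + b = c →
    (c : ℝ) ≤ Cε * (natRadical (a * b * c) : ℝ) ^ (1 + ε)

lemma natRadical_sq_le {n : ℕ} (hn : 0 < n) (h : IsSquarefull n) : natRadical n ^ 2 ≤ n := by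
  apply Nat.le_of_dvd hn
  unfold natRadical
  rw [← Finset.prod_pow]
  apply Finset.prod_dvd_of_isRelPrime
  · intro p hp q hq hpq
    have hp' := Nat.prime_of_mem_primeFactors hp
    have hq' := Nat.prime_of_mem_primeFactors hq
    exact Nat.coprime_iff_isRelPrime.mp
      (Nat.Coprime.pow 2 2 ((Nat.coprime_primes hp' hq').mpr hpq))
  · intro p hp
    exact h p (Nat.prime_of_mem_primeFactors hp) (Nat.dvd_of_mem_primeFactors hp)

lemma natRadical_dvd {n : ℕ} : natRadical n ∣ n := Nat.prod_primeFactors_dvd n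

lemma natRadical_pos (n : ℕ) : 0 < natRadical n :=
  Finset.prod_pos fun _ hp => (Nat.prime_of_mem_primeFactors hp).pos

lemma natRadical_mul_le (a b : ℕ) : natRadical (a * b) ≤ natRadical a * natRadical b := by
  rcases Nat.eq_zero_or_pos a with rfl | ha
  · have := natRadical_pos b
    have h1 : natRadical 0 = 1 := by simp [natRadical]
    simp only [zero_mul, mul_zero, h1]; omega
  rcases Nat.eq_zero_or_pos b with rfl | hb
  · have := natRadical_pos a
    have h1 : natRadical 0 = 1 := by simp [natRadical]
    simp only [zero_mul, mul_zero, h1]; omega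
  unfold natRadical
  rw [Nat.primeFactors_mul ha.ne' hb.ne', ← Finset.prod_union_inter]
  apply Nat.le_mul_of_pos_right
  exact Finset.prod_pos fun _ hp =>
    (Nat.prime_of_mem_primeFactors (Finset.mem_inter.mp hp).1).pos

lemma natRadical_sq (a : ℕ) : natRadical (a ^ 2) = natRadical a := by
  unfold natRadical
  rw [Nat.primeFactors_pow _ two_ne_zero]

lemma natRadical_le_of_dvd {a b : ℕ} (hb : b ≠ 0) (h : a ∣ b) : natRadical a ≤ natRadical b := by
  unfold natRadical
  exact Finset.prod_le_prod_of_subset_of_one_le' (Nat.primeFactors_mono h hb)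
    fun p hp _ => (Nat.prime_of_mem_primeFactors hp).one_le

lemma abc_aux {g u e : ℕ} (hg : 0 < g) (hu : 0 < u) (he : 0 < e)
    (h1 : IsSquarefull (g * u)) (h2 : IsSquarefull (g * (u + e)))
    (h3 : IsSquarefull (g * (u + 2 * e))) :
    natRadical (u * (u + 2 * e) * e ^ 2 * (u + e) ^ 2) ^ 2 ≤
      (g * u) * (g * (u + e)) * (g * (u + 2 * e)) * e ^ 2 := by
  have key : ∀ v : ℕ, 0 < v → IsSquarefull (g * v) → natRadical v ^ 2 ≤ g * v := fun v hv h =>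
    (Nat.pow_le_pow_left (natRadical_le_of_dvd (by positivity) (Dvd.intro_left g rfl)) 2).trans
      (natRadical_sq_le (by positivity) h)
  have k1 := key u hu h1
  have k2 := key (u + e) (by omega) h2
  have k3 := key (u + 2 * e) (by omega) h3
  have k4 : natRadical e ≤ e := Nat.le_of_dvd he natRadical_dvd
  have hr : natRadical (u * (u + 2 * e) * e ^ 2 * (u + e) ^ 2) ≤
      natRadical u * natRadical (u + 2 * e) * natRadical e * natRadical (u + e) := by
    refine (natRadical_mul_le _ _).trans ?_
    rw [natRadical_sq]
    gcongr
    refine (natRadical_mul_le _ _).trans ?_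
    rw [natRadical_sq]
    gcongr
    exact natRadical_mul_le _ _
  calc _ ≤ (natRadical u * natRadical (u + 2 * e) * natRadical e * natRadical (u + e)) ^ 2 := by
        gcongr
    _ = natRadical u ^ 2 * natRadical (u + e) ^ 2 * natRadical (u + 2 * e) ^ 2
        * natRadical e ^ 2 := by ring
    _ ≤ _ := by gcongr

/-- Assuming the abc-conjecture, there is a constant `C > 0` such that for all real
`x > C` and `1 ≤ y ≤ x^0.2`, the squarefull integers in the interval `(x, x + y]`
contain no non-trivial three-term arithmetic progression. -/
theorem no_three_term_AP_squarefull_of_abc (habc : ABCConjecture) :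
    ∃ C : ℝ, 0 < C ∧ ∀ x y : ℝ, C < x → 1 ≤ y → y ≤ x ^ ((0.2 : ℝ)) →
      ¬ ∃ n₁ n₂ n₃ : ℕ, n₁ < n₂ ∧ n₂ < n₃ ∧
        IsSquarefull n₁ ∧ IsSquarefull n₂ ∧ IsSquarefull n₃ ∧
        x < (n₁ : ℝ) ∧ (n₁ : ℝ) ≤ x + y ∧
        x < (n₂ : ℝ) ∧ (n₂ : ℝ) ≤ x + y ∧
        x < (n₃ : ℝ) ∧ (n₃ : ℝ) ≤ x + y ∧
        n₁ + n₃ = 2 * n₂ := by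
  obtain ⟨K, hK, habc⟩ := habc (1 / 34) (by norm_num)
  refine ⟨1 + (9 * K) ^ 20, by positivity, ?_⟩
  rintro x y hx hy hyx ⟨n₁, n₂, n₃, h12, h23, s1, s2, s3, l1, -, l2, u2, l3, u3, hAP⟩
  have hKp : (0 : ℝ) < (9 * K) ^ 20 := by positivity
  have hx1 : 1 < x := by linarith
  -- the twentieth root of x
  obtain ⟨t, ht0, htx⟩ : ∃ t : ℝ, 0 < t ∧ t ^ 20 = x := by
    refine ⟨x ^ ((1 : ℝ) / 20), by positivity, ?_⟩
    rw [← Real.rpow_natCast, ← Real.rpow_mul (by linarith)]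
    norm_num
  have ht1 : 1 < t := by
    by_contra h
    have := pow_le_one₀ (n := 20) ht0.le (not_lt.mp h)
    linarith
  have htK : 9 * K < t := by
    by_contra h
    have := pow_le_pow_left₀ ht0.le (not_lt.mp h) 20
    linarith
  have hyt : y ≤ t ^ 4 := by
    refine hyx.trans (le_of_eq ?_)
    rw [← htx, ← Real.rpow_natCast, ← Real.rpow_mul ht0.le, ← Real.rpow_natCast]
    norm_num
  have hn1 : 0 < n₁ := by
    have : (0 : ℝ) < n₁ := by linarith
    exact_mod_cast this
  obtain ⟨d, rfl⟩ := Nat.exists_eq_add_of_lt h12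
  obtain ⟨g, u, e, hg, hcop, hgu, hge⟩ :
      ∃ g u e : ℕ, 0 < g ∧ Nat.Coprime u e ∧ n₁ = g * u ∧ d + 1 = g * e := by
    obtain ⟨u, e, hc, h1, h2⟩ := Nat.exists_coprime n₁ (d + 1)
    exact ⟨_, u, e, Nat.gcd_pos_of_pos_left _ hn1, hc, by rw [mul_comm]; exact h1,
      by rw [mul_comm]; exact h2⟩
  have hu : 0 < u := Nat.pos_of_ne_zero (by rintro rfl; simp at hgu; omega)
  have he : 0 < e := Nat.pos_of_ne_zero (by rintro rfl; simp at hge)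
  have hn2 : n₁ + d + 1 = g * (u + e) := by rw [mul_add]; omega
  have hn3 : n₃ = g * (u + 2 * e) := by
    have : g * (u + 2 * e) = g * u + 2 * (g * e) := by ring
    omega
  have hn3' : n₃ = n₁ + 2 * (d + 1) := by omega
  have hgeR : ((d : ℝ) + 1) = g * e := by exact_mod_cast hge
  have hd : (g : ℝ) * e ≤ t ^ 4 := by
    have : (n₃ : ℝ) = n₁ + 2 * (d + 1) := by exact_mod_cast hn3'
    have : (0 : ℝ) ≤ d := by positivity
    linarith
  rw [hgu] at s1 l1
  rw [hn2] at s2 l2 u2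
  rw [hn3] at s3 l3 u3
  have hR := abc_aux hg hu he s1 s2 s3
  have hc := habc (u * (u + 2 * e)) (e ^ 2) ((u + e) ^ 2) (by positivity) (by positivity)
    (by positivity) (by
      apply Nat.Coprime.pow_right
      apply Nat.Coprime.mul_left hcop
      simpa using hcop) (by ring)
  have hRpos := natRadical_pos (u * (u + 2 * e) * e ^ 2 * (u + e) ^ 2)
  generalize natRadical (u * (u + 2 * e) * e ^ 2 * (u + e) ^ 2) = R at hR hc hRpos
  have hRp : (0 : ℝ) < R := by exact_mod_cast hRpos
  have hR' : (R : ℝ) ^ 2 ≤ ((g * u : ℕ) : ℝ) * ((g * (u + e) : ℕ) : ℝ)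
      * ((g * (u + 2 * e) : ℕ) : ℝ) * (e : ℝ) ^ 2 := by exact_mod_cast hR
  have hg1 : (1 : ℝ) ≤ g := by exact_mod_cast hg
  have he1 : (1 : ℝ) ≤ e := by exact_mod_cast he
  have hy2 : x + y ≤ 2 * t ^ 20 := by
    have : t ^ 4 ≤ t ^ 20 := pow_le_pow_right₀ ht1.le (by norm_num)
    linarith
  have v1 : ((g * u : ℕ) : ℝ) ≤ 2 * t ^ 20 := by
    have : ((g * u : ℕ) : ℝ) ≤ ((g * (u + e) : ℕ) : ℝ) := by
      exact_mod_cast Nat.mul_le_mul_left g (Nat.le_add_right u e)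
    linarith
  have hR2 : (R : ℝ) ≤ 3 * t ^ 30 * e := by
    apply (sq_le_sq₀ hRp.le (by positivity)).mp
    calc (R : ℝ) ^ 2 ≤ _ := hR'
      _ ≤ (2 * t ^ 20) * (2 * t ^ 20) * (2 * t ^ 20) * (e : ℝ) ^ 2 := by
        gcongr
        · exact u2.trans hy2
        · exact u3.trans hy2
      _ = 8 * (t ^ 60 * e ^ 2) := by ring
      _ ≤ 9 * (t ^ 60 * e ^ 2) := by
        have : 0 ≤ t ^ 60 * (e : ℝ) ^ 2 := by positivity
        linarith
      _ = _ := by ring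
  have het : (e : ℝ) ≤ t ^ 4 := by nlinarith
  have hRe : (R : ℝ) ^ ((1 : ℝ) / 34) ≤ 3 * t := by
    have h34 : (R : ℝ) ≤ (3 * t) ^ 34 := by
      calc (R : ℝ) ≤ 3 * t ^ 30 * e := hR2
        _ ≤ 3 * t ^ 30 * t ^ 4 := by gcongr
        _ = 3 * t ^ 34 := by ring
        _ ≤ 3 ^ 34 * t ^ 34 := by gcongr; norm_num
        _ = _ := by ring
    calc (R : ℝ) ^ ((1 : ℝ) / 34) ≤ ((3 * t) ^ 34) ^ ((1 : ℝ) / 34) := by gcongr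
      _ = 3 * t := by
        rw [← Real.rpow_natCast, ← Real.rpow_mul (by positivity)]
        norm_num
  rw [Real.rpow_add hRp, Real.rpow_one] at hc
  have hm : t ^ 40 < 9 * K * t ^ 39 := by
    calc t ^ 40 = (t ^ 20) ^ 2 := by ring
      _ < ((g * (u + e) : ℕ) : ℝ) ^ 2 := by
        rw [htx]; gcongr
      _ = (g : ℝ) ^ 2 * (((u + e) ^ 2 : ℕ) : ℝ) := by push_cast; ring
      _ ≤ (g : ℝ) ^ 2 * (K * (R * (R : ℝ) ^ ((1 : ℝ) / 34))) := by gcongr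
      _ ≤ (g : ℝ) ^ 2 * (K * ((3 * t ^ 30 * e) * (3 * t))) := by gcongr
      _ = 9 * K * t ^ 31 * (g * (g * e)) := by ring
      _ ≤ 9 * K * t ^ 31 * (t ^ 4 * t ^ 4) := by
        have : (g : ℝ) ≤ t ^ 4 := by nlinarith
        gcongr
      _ = _ := by ring
  have : 9 * K * t ^ 39 < t * t ^ 39 := by gcongr
  have h40 : t * t ^ 39 = t ^ 40 := by ring
  linarith
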